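/- arXiv:1605.03046 — 2 statements merged into one kernel-verified Lean document; each statement's English description precedes it below -/
import Mathlib

section
/- Fix positive reals p₋₁, p₀, p₁ and set ρ = 1/(p₀ + 2√(p₋₁p₁)). Let b_n be the total weight of Motzkin bridges of length n and B(z) = Σ_{n≥0} b_n zⁿ (which converges and satisfies B(z) ≥ 1 for 0 ≤ z < ρ), and define the generating function of arches A(z) = 1 − 1/B(z). Then there exist an open neighborhood U ⊆ ℂ of ρ and functions a, b analytic on U such that for every real z ∈ U with 0 < z < ρ, A(z) = a(z) + b(z)·√(1 − z/ρ). -/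
open scoped BigOperators Classical

/-- Value of a step encoded by `Fin 3`: `0 ↦ -1`, `1 ↦ 0`, `2 ↦ +1`. -/
def stepVal (s : Fin 3) : ℤ := (s : ℤ) - 1

/-- Weight of a single step: `p₋₁` for `-1`, `p₀` for `0`, `p₁` for `+1`. -/
def stepWeight (pm p0 p1 : ℝ) (s : Fin 3) : ℝ :=
  if s = 0 then pm else if s = 1 then p0 else p1

/-- Weight of a Motzkin walk (product of its step weights). -/
def walkWeight (pm p0 p1 : ℝ) {n : ℕ} (w : Fin n → Fin 3) : ℝ :=
  ∏ i, stepWeight pm p0 p1 (w i)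

/-- Partial sum `ω_j` of the walk `w`. -/
def psum {n : ℕ} (w : Fin n → Fin 3) (j : ℕ) : ℤ :=
  ∑ i ∈ Finset.univ.filter (fun i : Fin n => (i : ℕ) < j), stepVal (w i)

/-- Total weight of Motzkin bridges of length `n`. -/
noncomputable def bridgeW (pm p0 p1 : ℝ) (n : ℕ) : ℝ :=
  ∑ w ∈ Finset.univ.filter (fun w : Fin n → Fin 3 => psum w n = 0),
    walkWeight pm p0 p1 w

/-- Number of returns to zero of a walk of length `n`. -/
def retZero {n : ℕ} (w : Fin n → Fin 3) : ℕ :=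
  ((Finset.Icc 1 n).filter (fun j => psum w j = 0)).card

/-- Total weight of walks of length `n` with exactly `k` returns to zero. -/
noncomputable def walkRetW (pm p0 p1 : ℝ) (n k : ℕ) : ℝ :=
  ∑ w ∈ Finset.univ.filter (fun w : Fin n → Fin 3 => retZero w = k),
    walkWeight pm p0 p1 w

/-- Number of sign changes of a walk of length `n`. -/
def signChanges {n : ℕ} (w : Fin n → Fin 3) : ℕ :=
  (((Finset.range (n+1)) ×ˢ (Finset.range (n+1))).filter
    (fun p => p.1 < p.2 ∧ psum w p.1 * psum w p.2 < 0 ∧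
      ∀ l ∈ Finset.Ioo p.1 p.2, psum w l = 0)).card

/-- Total weight of bridges of length `n` with exactly `k` sign changes. -/
noncomputable def bridgeSignW (pm p0 p1 : ℝ) (n k : ℕ) : ℝ :=
  ∑ w ∈ Finset.univ.filter
      (fun w : Fin n → Fin 3 => psum w n = 0 ∧ signChanges w = k),
    walkWeight pm p0 p1 w

/-- Total weight of positive excursions of length `n`. -/
noncomputable def posExcW (pm p0 p1 : ℝ) (n : ℕ) : ℝ :=
  ∑ w ∈ Finset.univ.filter
      (fun w : Fin n → Fin 3 => psum w n = 0 ∧ ∀ j ∈ Finset.range (n+1), 0 ≤ psum w j),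
    walkWeight pm p0 p1 w

/-- Total weight of negative excursions of length `n`. -/
noncomputable def negExcW (pm p0 p1 : ℝ) (n : ℕ) : ℝ :=
  ∑ w ∈ Finset.univ.filter
      (fun w : Fin n → Fin 3 => psum w n = 0 ∧ ∀ j ∈ Finset.range (n+1), psum w j ≤ 0),
    walkWeight pm p0 p1 w

/-- A positive bridge: a bridge whose last nonzero partial sum is positive. -/
def IsPosBridge {n : ℕ} (w : Fin n → Fin 3) : Prop :=
  psum w n = 0 ∧ ∃ j ∈ Finset.range (n+1),
    0 < psum w j ∧ ∀ l ∈ Finset.Ioc j n, psum w l = 0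

/-- A negative bridge: a bridge whose last nonzero partial sum is negative. -/
def IsNegBridge {n : ℕ} (w : Fin n → Fin 3) : Prop :=
  psum w n = 0 ∧ ∃ j ∈ Finset.range (n+1),
    psum w j < 0 ∧ ∀ l ∈ Finset.Ioc j n, psum w l = 0

instance {n : ℕ} (w : Fin n → Fin 3) : Decidable (IsPosBridge w) := by
  unfold IsPosBridge; infer_instance

instance {n : ℕ} (w : Fin n → Fin 3) : Decidable (IsNegBridge w) := by
  unfold IsNegBridge; infer_instance

/-- Total weight of positive bridges of length `n` with `k` sign changes. -/
noncomputable def posBridgeSignW (pm p0 p1 : ℝ) (n k : ℕ) : ℝ :=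
  ∑ w ∈ Finset.univ.filter
      (fun w : Fin n → Fin 3 => IsPosBridge w ∧ signChanges w = k),
    walkWeight pm p0 p1 w

/-- Total weight of negative bridges of length `n` with `k` sign changes. -/
noncomputable def negBridgeSignW (pm p0 p1 : ℝ) (n k : ℕ) : ℝ :=
  ∑ w ∈ Finset.univ.filter
      (fun w : Fin n → Fin 3 => IsNegBridge w ∧ signChanges w = k),
    walkWeight pm p0 p1 w

/-- Total weight of walks of length `n` with `k` sign changes. -/
noncomputable def walkSignW (pm p0 p1 : ℝ) (n k : ℕ) : ℝ :=
  ∑ w ∈ Finset.univ.filter (fun w : Fin n → Fin 3 => signChanges w = k),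
    walkWeight pm p0 p1 w

/-- Height of a walk of length `n` (as a natural number; it is `max_j ω_j ≥ 0`). -/
def height {n : ℕ} (w : Fin n → Fin 3) : ℕ :=
  (Finset.range (n+1)).sup (fun j => (psum w j).toNat)

/-- Total weight of walks of length `n` of height exactly `h`. -/
noncomputable def heightW (pm p0 p1 : ℝ) (n h : ℕ) : ℝ :=
  ∑ w ∈ Finset.univ.filter (fun w : Fin n → Fin 3 => height w = h),
    walkWeight pm p0 p1 w

/-- Total weight of the walks of length `n` that lead from height `k` to height `0`. -/
noncomputable def returnWeight (pm p0 p1 : ℝ) (n : ℕ) (k : ℤ) : ℝ :=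
  ∑ w : Fin n → Fin 3, walkWeight pm p0 p1 w * if k + ∑ i, stepVal (w i) = 0 then 1 else 0

lemma bridgeW_eq_returnWeight (pm p0 p1 : ℝ) (n : ℕ) :
    bridgeW pm p0 p1 n = returnWeight pm p0 p1 n 0 := by
  simp [bridgeW, returnWeight, psum, Finset.sum_filter]

lemma bridgeW_zero (pm p0 p1 : ℝ) : bridgeW pm p0 p1 0 = 1 := by
  simp [bridgeW_eq_returnWeight, returnWeight, walkWeight]

lemma bridgeW_nonneg {pm p0 p1 : ℝ} (hpm : 0 ≤ pm) (hp0 : 0 ≤ p0) (hp1 : 0 ≤ p1) (n : ℕ) :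
    0 ≤ bridgeW pm p0 p1 n := by
  refine Finset.sum_nonneg fun w _ => Finset.prod_nonneg fun i _ => ?_
  unfold stepWeight
  split_ifs <;> assumption

lemma returnWeight_zero (pm p0 p1 : ℝ) (k : ℤ) :
    returnWeight pm p0 p1 0 k = if k = 0 then 1 else 0 := by
  simp [returnWeight, walkWeight]

lemma returnWeight_succ (pm p0 p1 : ℝ) (n : ℕ) (k : ℤ) :
    returnWeight pm p0 p1 (n + 1) k = pm * returnWeight pm p0 p1 n (k - 1) +
      p0 * returnWeight pm p0 p1 n k + p1 * returnWeight pm p0 p1 n (k + 1) := by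
  unfold returnWeight
  rw [← (Fin.consEquiv fun _ : Fin (n + 1) => Fin 3).sum_comp, Fintype.sum_prod_type,
    Fin.sum_univ_three, Finset.mul_sum, Finset.mul_sum, Finset.mul_sum]
  congr 1
  · congr 1
    all_goals
      refine Finset.sum_congr rfl fun w _ => ?_
      simp [Fin.consEquiv, walkWeight, Fin.prod_univ_succ, Fin.sum_univ_succ, stepWeight, stepVal,
        ← add_assoc, sub_eq_add_neg]
  · refine Finset.sum_congr rfl fun w _ => ?_
    have hup : stepVal 2 = 1 := rfl
    simp [Fin.consEquiv, walkWeight, Fin.prod_univ_succ, Fin.sum_univ_succ, stepWeight, hup,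
      ← add_assoc]

/-- If `u` is generated from the unit mass at `0` by the symmetric kernel `(s, p, s)` and `f` is a
bounded solution of the corresponding resolvent equation at `z`, then `f 0 = ∑ uₙ(0) zⁿ`. -/
lemma tendsto_resolvent {s p z C : ℝ} (hs : 0 ≤ s) (hp : 0 ≤ p) (hz : 0 ≤ z)
    (hlt : z * (p + 2 * s) < 1) {u : ℕ → ℤ → ℝ} {f : ℤ → ℝ}
    (hu_zero : ∀ k, u 0 k = if k = 0 then 1 else 0)
    (hu_succ : ∀ n k, u (n + 1) k = s * u n (k - 1) + p * u n k + s * u n (k + 1))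
    (hf_bound : ∀ k, |f k| ≤ C)
    (hf : ∀ k, f k = (if k = 0 then 1 else 0) + z * (s * f (k - 1) + p * f k + s * f (k + 1))) :
    Filter.Tendsto (fun N => ∑ n ∈ Finset.range N, u n 0 * z ^ n) Filter.atTop (nhds (f 0)) := by
  have hpartial (N : ℕ) (k : ℤ) : ∑ n ∈ Finset.range (N + 1), u n k * z ^ n =
      (if k = 0 then 1 else 0) + z * (s * ∑ n ∈ Finset.range N, u n (k - 1) * z ^ n +
        p * ∑ n ∈ Finset.range N, u n k * z ^ n +
        s * ∑ n ∈ Finset.range N, u n (k + 1) * z ^ n) := by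
    rw [Finset.sum_range_succ', hu_zero, pow_zero, mul_one, add_comm]
    congr 1
    simp only [Finset.mul_sum, ← Finset.sum_add_distrib]
    refine Finset.sum_congr rfl fun n _ => ?_
    rw [hu_succ]
    ring
  have herror (N : ℕ) : ∀ k, |f k - ∑ n ∈ Finset.range N, u n k * z ^ n| ≤
      C * (z * (p + 2 * s)) ^ N := by
    induction N with
    | zero => simpa using hf_bound
    | succ N ih =>
      intro k
      have hrec : f k - ∑ n ∈ Finset.range (N + 1), u n k * z ^ n =
          z * (s * (f (k - 1) - ∑ n ∈ Finset.range N, u n (k - 1) * z ^ n) +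
            p * (f k - ∑ n ∈ Finset.range N, u n k * z ^ n) +
            s * (f (k + 1) - ∑ n ∈ Finset.range N, u n (k + 1) * z ^ n)) := by
        rw [hpartial]
        linear_combination hf k
      rw [hrec, abs_mul, abs_of_nonneg hz]
      calc z * |_| ≤ z * (s * (C * (z * (p + 2 * s)) ^ N) + p * (C * (z * (p + 2 * s)) ^ N) +
            s * (C * (z * (p + 2 * s)) ^ N)) := by
            gcongr
            refine (abs_add_three _ _ _).trans ?_
            simp only [abs_mul, abs_of_nonneg hs, abs_of_nonneg hp]
            gcongr <;> exact ih _
        _ = C * (z * (p + 2 * s)) ^ (N + 1) := by ring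
  have hlim : Filter.Tendsto (fun N => C * (z * (p + 2 * s)) ^ N) Filter.atTop (nhds 0) := by
    simpa using (tendsto_pow_atTop_nhds_zero_of_lt_one (by positivity) hlt).const_mul C
  rw [tendsto_iff_dist_tendsto_zero]
  refine squeeze_zero (fun _ => dist_nonneg) (fun N => ?_) hlim
  rw [dist_comm, Real.dist_eq]
  exact herror N 0

/-- The function `k ↦ r ^ |k| / R`, with `r` the small root of the kernel equation, is a bounded
solution of the resolvent equation of the symmetric kernel `(s, p, s)`. -/
lemma exists_resolvent {s p z : ℝ} (hs : 0 ≤ s) (hz : 0 ≤ z) (hlt : z * (p + 2 * s) < 1) :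
    ∃ f : ℤ → ℝ, (∀ k, |f k| ≤ (√((1 - z * p) ^ 2 - (2 * z * s) ^ 2))⁻¹) ∧
      f 0 = (√((1 - z * p) ^ 2 - (2 * z * s) ^ 2))⁻¹ ∧
      ∀ k, f k = (if k = 0 then 1 else 0) +
        z * (s * f (k - 1) + p * f k + s * f (k + 1)) := by
  obtain ⟨X, hX⟩ : ∃ X, X = 1 - z * p := ⟨_, rfl⟩
  obtain ⟨Y, hY⟩ : ∃ Y, Y = 2 * z * s := ⟨_, rfl⟩
  rw [← hX, ← hY]
  have hY0 : 0 ≤ Y := by rw [hY]; positivity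
  have hYX : Y < X := by rw [hX, hY]; linarith
  have hpos : 0 < X ^ 2 - Y ^ 2 := by nlinarith
  obtain ⟨R, hR⟩ : ∃ R, R = √(X ^ 2 - Y ^ 2) := ⟨_, rfl⟩
  have hR0 : 0 < R := hR ▸ Real.sqrt_pos.2 hpos
  have hRsq : R ^ 2 = X ^ 2 - Y ^ 2 := hR ▸ Real.sq_sqrt hpos.le
  rw [← hR]
  have hXR : 0 < X + R := by linarith
  obtain ⟨r, hr⟩ : ∃ r, r = Y / (X + R) := ⟨_, rfl⟩
  have hr0 : 0 ≤ r := hr ▸ by positivity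
  have hr1 : r ≤ 1 := by rw [hr, div_le_one hXR]; linarith
  have hcenter : X - Y * r = R := by
    rw [hr]; field_simp; linear_combination -hRsq
  have hkernel : Y * (r ^ 2 + 1) = 2 * X * r := by
    rw [hr]; field_simp; linear_combination Y * hRsq
  refine ⟨fun k => R⁻¹ * r ^ k.natAbs, fun k => ?_, by simp, fun k => ?_⟩
  · rw [abs_of_nonneg (by positivity)]
    exact mul_le_of_le_one_right (by positivity) (pow_le_one₀ hr0 hr1)
  · have hoff (m : ℕ) : R⁻¹ * r ^ (m + 1) = z * (s * (R⁻¹ * r ^ m) + p * (R⁻¹ * r ^ (m + 1)) +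
        s * (R⁻¹ * r ^ (m + 2))) := by
      rw [hX, hY] at hkernel
      linear_combination (-R⁻¹ * r ^ m / 2) * hkernel
    rcases lt_trichotomy k 0 with hk | rfl | hk
    · obtain ⟨m, rfl⟩ : ∃ m : ℕ, k = -(m + 1 : ℤ) := ⟨(-k - 1).toNat, by omega⟩
      have h₁ : (-(m + 1 : ℤ) - 1).natAbs = m + 2 := by omega
      have h₂ : (-(m + 1 : ℤ)).natAbs = m + 1 := by omega
      have h₃ : (-(m + 1 : ℤ) + 1).natAbs = m := by omega
      simp only [h₁, h₂, h₃, if_neg hk.ne]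
      linear_combination hoff m
    · have hcancel : R⁻¹ * R = 1 := inv_mul_cancel₀ hR0.ne'
      rw [hX, hY] at hcenter
      simp
      linear_combination hcancel + R⁻¹ * hcenter
    · obtain ⟨m, rfl⟩ : ∃ m : ℕ, k = (m + 1 : ℤ) := ⟨(k - 1).toNat, by omega⟩
      have h₁ : ((m + 1 : ℤ) - 1).natAbs = m := by omega
      have h₂ : (m + 1 : ℤ).natAbs = m + 1 := by omega
      have h₃ : ((m + 1 : ℤ) + 1).natAbs = m + 2 := by omega
      simp only [h₁, h₂, h₃, if_neg hk.ne']
      linear_combination hoff m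

/-- Closed form of the generating function of bridges. -/
lemma hasSum_bridgeW {pm p0 p1 z : ℝ} (hpm : 0 < pm) (hp0 : 0 ≤ p0) (hp1 : 0 < p1) (hz : 0 ≤ z)
    (hlt : z * (p0 + 2 * √(pm * p1)) < 1) :
    HasSum (fun n => bridgeW pm p0 p1 n * z ^ n)
      (√((1 - z * p0) ^ 2 - (2 * z * √(pm * p1)) ^ 2))⁻¹ := by
  obtain ⟨s, hs⟩ : ∃ s, s = √(pm * p1) := ⟨_, rfl⟩
  rw [← hs] at hlt ⊢
  have hs0 : 0 < s := hs ▸ Real.sqrt_pos.2 (by positivity)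
  have hssq : s ^ 2 = pm * p1 := hs ▸ Real.sq_sqrt (by positivity)
  obtain ⟨f, hf_bound, hf_zero, hf⟩ := exists_resolvent hs0.le hz hlt
  rw [hasSum_iff_tendsto_nat_of_nonneg
    (fun n => mul_nonneg (bridgeW_nonneg hpm.le hp0 hp1.le n) (by positivity)), ← hf_zero]
  have htilt : s / pm ≠ 0 := by positivity
  have hlim := tendsto_resolvent (u := fun n k => (s / pm) ^ k * returnWeight pm p0 p1 n k)
    hs0.le hp0 hz hlt (fun k => ?_) (fun n k => ?_) hf_bound hf
  · simpa [bridgeW_eq_returnWeight] using hlim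
  · rw [returnWeight_zero]
    split_ifs with hk <;> simp [hk]
  · have hdown : s * (s / pm) ^ (k - 1) = pm * (s / pm) ^ k := by
      rw [zpow_sub_one₀ htilt]; field_simp
    have hup : s * (s / pm) ^ (k + 1) = p1 * (s / pm) ^ k := by
      rw [zpow_add_one₀ htilt]; field_simp; rw [hssq]
    rw [returnWeight_succ]
    linear_combination (-returnWeight pm p0 p1 n (k - 1)) * hdown -
      returnWeight pm p0 p1 n (k + 1) * hup

/-- **Square-root decomposition of the generating function of arches**
`A(z) = 1 - 1/B(z) = a(z) + b(z)√(1-z/ρ)` near `ρ`. -/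
theorem arch_gf_decomposition (pm p0 p1 : ℝ)
    (hpm : 0 < pm) (hp0 : 0 < p0) (hp1 : 0 < p1) :
    let ρ : ℝ := 1 / (p0 + 2 * Real.sqrt (pm * p1))
    let B : ℝ → ℝ := fun z => ∑' n : ℕ, bridgeW pm p0 p1 n * z ^ n
    let A : ℝ → ℝ := fun z => 1 - 1 / B z
    (∀ z : ℝ, 0 ≤ z → z < ρ →
      Summable (fun n : ℕ => bridgeW pm p0 p1 n * z ^ n) ∧ 1 ≤ B z) ∧
    ∃ U : Set ℂ, IsOpen U ∧ (ρ : ℂ) ∈ U ∧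
      ∃ a b : ℂ → ℂ, AnalyticOnNhd ℂ a U ∧ AnalyticOnNhd ℂ b U ∧
        ∀ z : ℝ, (z : ℂ) ∈ U → 0 < z → z < ρ →
          (A z : ℂ) = a z + b z * (Real.sqrt (1 - z / ρ) : ℂ) := by
  intro ρ B A
  have hs : 0 < √(pm * p1) := Real.sqrt_pos.2 (by positivity)
  have hden : 0 < p0 + 2 * √(pm * p1) := by positivity
  have hlt {z : ℝ} (hz : z < ρ) : z * (p0 + 2 * √(pm * p1)) < 1 := (lt_div_iff₀ hden).1 hz
  have hsum {z : ℝ} (hz0 : 0 ≤ z) (hz : z < ρ) := hasSum_bridgeW hpm hp0.le hp1 hz0 (hlt hz)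
  refine ⟨fun z hz0 hz => ⟨(hsum hz0 hz).summable, ?_⟩, ?_⟩
  · have hle := (hsum hz0 hz).summable.le_tsum 0 fun n _ =>
      mul_nonneg (bridgeW_nonneg hpm.le hp0.le hp1.le n) (pow_nonneg hz0 n)
    simpa [bridgeW_zero] using hle
  · let g : ℂ → ℂ := fun z => 1 - ((p0 - 2 * √(pm * p1) : ℝ) : ℂ) * z
    have hg : Differentiable ℂ g := by fun_prop
    refine ⟨g ⁻¹' Complex.slitPlane, Complex.isOpen_slitPlane.preimage hg.continuous, ?_,
      fun _ => 1, fun z => -Complex.exp (Complex.log (g z) / 2), analyticOnNhd_const, ?_, ?_⟩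
    · have hval : g ρ = ((4 * √(pm * p1) / (p0 + 2 * √(pm * p1)) : ℝ) : ℂ) := by
        simp only [g, ← Complex.ofReal_mul, ← Complex.ofReal_one, ← Complex.ofReal_sub]
        congr 1
        simp only [ρ]
        field_simp
        ring
      rw [Set.mem_preimage, hval, Complex.ofReal_mem_slitPlane]
      positivity
    · refine DifferentiableOn.analyticOnNhd ?_ (Complex.isOpen_slitPlane.preimage hg.continuous)
      exact ((hg.differentiableOn.clog fun z hz => hz).div_const 2).cexp.neg
    · intro z _ hz0 hz
      have hz' := hlt hz
      have hsmall : 0 < 1 - (p0 - 2 * √(pm * p1)) * z := by nlinarith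
      have hfactor : 1 - z / ρ = 1 - z * (p0 + 2 * √(pm * p1)) := by simp [ρ]
      have hroot : Complex.exp (Complex.log (g z) / 2) =
          (√(1 - (p0 - 2 * √(pm * p1)) * z) : ℂ) := by
        have hval : g z = ((1 - (p0 - 2 * √(pm * p1)) * z : ℝ) : ℂ) := by simp [g]
        rw [hval, ← Complex.ofReal_log hsmall.le, Real.sqrt_eq_rpow (1 - _),
          Real.rpow_def_of_pos hsmall]
        push_cast
        ring_nf
      have hA : A z = 1 - √(1 - (p0 - 2 * √(pm * p1)) * z) * √(1 - z / ρ) := by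
        simp only [A, B]
        rw [(hsum hz0.le hz).tsum_eq, one_div, inv_inv, hfactor, ← Real.sqrt_mul hsmall.le]
        ring_nf
      beta_reduce
      rw [hroot, hA]
      push_cast
      ring
end

section
/- Fix positive reals p₋₁, p₀, p₁ with p₁ ≠ p₋₁, and let P(1) = p₋₁ + p₀ + p₁. Let w_{n,k} denote the total weight of Motzkin walks of length n having exactly k returns to zero, and let X_n be defined by P[X_n = k] = w_{n,k}/P(1)ⁿ. Then X_n converges in distribution to a geometric distribution: for every fixed k ∈ ℕ, lim_{n→∞} w_{n,k}/P(1)ⁿ = (1−λ)^k · λ, where λ = |p₁ − p₋₁|/P(1). -/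
open scoped BigOperators Classical

/-- Number of visits to zero at times `1, …, n` of the walk `w` started at height `x`. -/
def visitsZero {n : ℕ} (x : ℤ) (w : Fin n → Fin 3) : ℕ :=
  ∑ j ∈ Finset.range n, if x + psum w (j + 1) = 0 then 1 else 0

/-- Total weight of walks of length `n` started at `x` with exactly `k` visits to zero. -/
noncomputable def visitsW (pm p0 p1 : ℝ) (n : ℕ) (x : ℤ) (k : ℕ) : ℝ :=
  ∑ w : Fin n → Fin 3, if visitsZero x w = k then walkWeight pm p0 p1 w else 0

/-- Given `f : ℤ → ℕ → ℝ` indexed by a position and a number of visits to zero still to be made,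
the value seen on arrival at `y`: arriving at zero uses up one visit. -/
def arrive (f : ℤ → ℕ → ℝ) (y : ℤ) (k : ℕ) : ℝ :=
  if y = 0 then (match k with | 0 => 0 | k + 1 => f 0 k) else f y k

/-- Probability that the walk with `pm < p1` started at `x` visits zero at a positive time. -/
noncomputable def hitProb (pm p0 p1 : ℝ) (x : ℤ) : ℝ :=
  if x = 0 then 1 - (p1 - pm) / (pm + p0 + p1) else (pm / p1) ^ x.toNat

/-- Probability that the infinite walk with `pm < p1` started at `x` makes exactly `k` visits to
zero at positive times. -/
noncomputable def visitsLimit (pm p0 p1 : ℝ) (x : ℤ) : ℕ → ℝ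
  | 0 => 1 - hitProb pm p0 p1 x
  | k + 1 => hitProb pm p0 p1 x *
      ((1 - (p1 - pm) / (pm + p0 + p1)) ^ k * ((p1 - pm) / (pm + p0 + p1)))

lemma psum_zero {n : ℕ} (w : Fin n → Fin 3) : psum w 0 = 0 := by
  simp [psum]

lemma psum_cons_succ {n : ℕ} (s : Fin 3) (w : Fin n → Fin 3) (j : ℕ) :
    psum (Fin.cons s w : Fin (n + 1) → Fin 3) (j + 1) = stepVal s + psum w j := by
  simp [psum, Finset.sum_filter, Fin.sum_univ_succ]

lemma visitsZero_cons {n : ℕ} (x : ℤ) (s : Fin 3) (w : Fin n → Fin 3) :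
    visitsZero x (Fin.cons s w : Fin (n + 1) → Fin 3) =
      visitsZero (x + stepVal s) w + if x + stepVal s = 0 then 1 else 0 := by
  simp only [visitsZero, Finset.sum_range_succ', psum_cons_succ, psum_zero, add_zero, add_assoc]

lemma walkWeight_cons (pm p0 p1 : ℝ) {n : ℕ} (s : Fin 3) (w : Fin n → Fin 3) :
    walkWeight pm p0 p1 (Fin.cons s w : Fin (n + 1) → Fin 3) =
      stepWeight pm p0 p1 s * walkWeight pm p0 p1 w := by
  simp [walkWeight, Fin.prod_univ_succ]

lemma retZero_eq_visitsZero {n : ℕ} (w : Fin n → Fin 3) : retZero w = visitsZero 0 w := by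
  rw [retZero, visitsZero, Finset.card_filter, ← Finset.Ico_add_one_right_eq_Icc,
    Finset.sum_Ico_eq_sum_range]
  simp [add_comm]

lemma walkRetW_eq_visitsW (pm p0 p1 : ℝ) (n k : ℕ) :
    walkRetW pm p0 p1 n k = visitsW pm p0 p1 n 0 k := by
  simp only [walkRetW, visitsW, Finset.sum_filter, retZero_eq_visitsZero]

lemma visitsW_zero (pm p0 p1 : ℝ) (x : ℤ) (k : ℕ) :
    visitsW pm p0 p1 0 x k = if k = 0 then 1 else 0 := by
  simp [visitsW, visitsZero, walkWeight, eq_comm]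

lemma arrive_visitsW (pm p0 p1 : ℝ) (n : ℕ) (y : ℤ) (k : ℕ) :
    arrive (visitsW pm p0 p1 n) y k = ∑ w : Fin n → Fin 3,
      if visitsZero y w + (if y = 0 then 1 else 0) = k then walkWeight pm p0 p1 w else 0 := by
  by_cases hy : y = 0
  · subst hy
    cases k <;> simp [arrive, visitsW]
  · simp [arrive, visitsW, hy]

lemma visitsW_succ (pm p0 p1 : ℝ) (n : ℕ) (x : ℤ) (k : ℕ) :
    visitsW pm p0 p1 (n + 1) x k =
      pm * arrive (visitsW pm p0 p1 n) (x - 1) k + p0 * arrive (visitsW pm p0 p1 n) x k +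
        p1 * arrive (visitsW pm p0 p1 n) (x + 1) k := by
  have key : visitsW pm p0 p1 (n + 1) x k =
      ∑ s : Fin 3, stepWeight pm p0 p1 s *
        arrive (visitsW pm p0 p1 n) (x + stepVal s) k := by
    rw [visitsW, ← (Fin.consEquiv fun _ : Fin (n + 1) => Fin 3).sum_comp, Fintype.sum_prod_type]
    refine Finset.sum_congr rfl fun s _ => ?_
    rw [arrive_visitsW, Finset.mul_sum]
    refine Finset.sum_congr rfl fun w _ => ?_
    simp only [Fin.consEquiv, Equiv.coe_fn_mk, visitsZero_cons, walkWeight_cons, mul_ite, mul_zero]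
  rw [key, Fin.sum_univ_three]
  simp [stepWeight, stepVal, sub_eq_add_neg]

lemma visitsW_neg (pm p0 p1 : ℝ) (n : ℕ) (x : ℤ) (k : ℕ) :
    visitsW p1 p0 pm n (-x) k = visitsW pm p0 p1 n x k := by
  induction n generalizing x k with
  | zero => simp only [visitsW_zero]
  | succ n ih =>
    have h (y : ℤ) : arrive (visitsW p1 p0 pm n) (-y) k = arrive (visitsW pm p0 p1 n) y k := by
      have h0 (j : ℕ) := ih 0 j
      simp only [neg_zero] at h0
      simp only [arrive, neg_eq_zero, ih, h0]
    rw [visitsW_succ, visitsW_succ, ← h (x - 1), ← h x, ← h (x + 1),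
      show -(x - 1) = -x + 1 by ring, show -(x + 1) = -x - 1 by ring]
    ring

lemma walkRetW_comm (pm p0 p1 : ℝ) (n k : ℕ) :
    walkRetW p1 p0 pm n k = walkRetW pm p0 p1 n k := by
  simpa only [walkRetW_eq_visitsW, neg_zero] using visitsW_neg pm p0 p1 n 0 k

section PositiveDrift

variable {pm p0 p1 : ℝ}

lemma visitsLimit_zero_left (k : ℕ) :
    visitsLimit pm p0 p1 0 k =
      (1 - (p1 - pm) / (pm + p0 + p1)) ^ k * ((p1 - pm) / (pm + p0 + p1)) := by
  cases k with
  | zero => simp [visitsLimit, hitProb]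
  | succ k => simp only [visitsLimit, hitProb, if_true]; ring

lemma arrive_visitsLimit_zero (y : ℤ) :
    arrive (visitsLimit pm p0 p1) y 0 = 1 - (pm / p1) ^ y.toNat := by
  by_cases hy : y = 0 <;> simp [arrive, visitsLimit, hitProb, hy]

lemma arrive_visitsLimit_succ (y : ℤ) (k : ℕ) :
    arrive (visitsLimit pm p0 p1) y (k + 1) = (pm / p1) ^ y.toNat *
      ((1 - (p1 - pm) / (pm + p0 + p1)) ^ k * ((p1 - pm) / (pm + p0 + p1))) := by
  by_cases hy : y = 0
  · simp [arrive, hy, visitsLimit_zero_left]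
  · simp [arrive, visitsLimit, hitProb, hy]

lemma hitProb_first_step (hpm : 0 < pm) (hp0 : 0 < p0) (hp1 : 0 < p1) (x : ℤ) :
    (pm + p0 + p1) * hitProb pm p0 p1 x =
      pm * (pm / p1) ^ (x - 1).toNat + p0 * (pm / p1) ^ x.toNat +
        p1 * (pm / p1) ^ (x + 1).toNat := by
  have hP : pm + p0 + p1 ≠ 0 := by positivity
  rcases lt_trichotomy x 0 with hx | rfl | hx
  · rw [hitProb, if_neg hx.ne, Int.toNat_of_nonpos hx.le,
      Int.toNat_of_nonpos (show x - 1 ≤ 0 by lia), Int.toNat_of_nonpos (show x + 1 ≤ 0 by lia)]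
    ring
  · simp only [hitProb, if_true, zero_sub, zero_add, Int.toNat_zero, pow_zero, Int.toNat_one,
      pow_one, Int.toNat_of_nonpos (show (-1 : ℤ) ≤ 0 by lia)]
    field_simp
    ring
  · obtain ⟨m, rfl⟩ : ∃ m : ℕ, x = m + 1 := ⟨(x - 1).toNat, by lia⟩
    rw [hitProb, if_neg hx.ne', show ((m : ℤ) + 1 - 1).toNat = m by lia,
      show ((m : ℤ) + 1).toNat = m + 1 by lia, show ((m : ℤ) + 1 + 1).toNat = m + 2 by lia,
      pow_succ, pow_add]
    field_simp
    ring

lemma visitsLimit_first_step (hpm : 0 < pm) (hp0 : 0 < p0) (hp1 : 0 < p1) (x : ℤ) (k : ℕ) :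
    (pm + p0 + p1) * visitsLimit pm p0 p1 x k =
      pm * arrive (visitsLimit pm p0 p1) (x - 1) k + p0 * arrive (visitsLimit pm p0 p1) x k +
        p1 * arrive (visitsLimit pm p0 p1) (x + 1) k := by
  have h := hitProb_first_step hpm hp0 hp1 x
  cases k with
  | zero =>
    simp only [arrive_visitsLimit_zero, visitsLimit]
    linear_combination -h
  | succ k =>
    simp only [arrive_visitsLimit_succ, visitsLimit]
    linear_combination ((1 - (p1 - pm) / (pm + p0 + p1)) ^ k * ((p1 - pm) / (pm + p0 + p1))) * h

lemma drift_div_mem_Icc (hpm : 0 < pm) (hp0 : 0 < p0) (hlt : pm < p1) :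
    (p1 - pm) / (pm + p0 + p1) ∈ Set.Icc (0 : ℝ) 1 :=
  ⟨div_nonneg (by linarith) (by linarith), (div_le_one (by linarith)).2 (by linarith)⟩

lemma hitProb_nonneg (hpm : 0 < pm) (hp0 : 0 < p0) (hlt : pm < p1) (x : ℤ) :
    0 ≤ hitProb pm p0 p1 x := by
  have hl := (drift_div_mem_Icc hpm hp0 hlt).2
  have hp1 := hpm.trans hlt
  rw [hitProb]
  split_ifs
  · linarith
  · positivity

lemma hitProb_le_zpow (hpm : 0 < pm) (hp0 : 0 < p0) (hlt : pm < p1) {t : ℝ}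
    (ht : pm / p1 ≤ t) (ht1 : t ≤ 1) (x : ℤ) : hitProb pm p0 p1 x ≤ t ^ x := by
  have hl := (drift_div_mem_Icc hpm hp0 hlt).1
  have hp1 := hpm.trans hlt
  have hr : 0 < pm / p1 := by positivity
  rw [hitProb]
  split_ifs with hx
  · simp only [hx, zpow_zero]
    linarith
  · rcases le_total 0 x with h | h
    · lift x to ℕ using h
      simpa using pow_le_pow_left₀ hr.le ht x
    · rw [Int.toNat_of_nonpos h, pow_zero]
      exact one_le_zpow_of_nonpos₀ (hr.trans_le ht) ht1 h

lemma abs_visitsW_zero_sub_visitsLimit_le (hpm : 0 < pm) (hp0 : 0 < p0) (hlt : pm < p1)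
    (x : ℤ) (k : ℕ) :
    |visitsW pm p0 p1 0 x k - visitsLimit pm p0 p1 x k| ≤ hitProb pm p0 p1 x := by
  obtain ⟨hl0, hl1⟩ := drift_div_mem_Icc hpm hp0 hlt
  have ha := hitProb_nonneg hpm hp0 hlt x
  rw [visitsW_zero]
  cases k with
  | zero => simp [visitsLimit, abs_of_nonneg ha]
  | succ k =>
    have hq : (0 : ℝ) ≤ 1 - (p1 - pm) / (pm + p0 + p1) := by linarith
    simp only [visitsLimit, Nat.add_eq_zero_iff, one_ne_zero, and_false, if_false, zero_sub,
      abs_neg]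
    rw [abs_of_nonneg (by positivity)]
    exact mul_le_of_le_one_right ha
      (mul_le_one₀ (pow_le_one₀ hq (by linarith)) hl0 hl1)

lemma abs_visitsW_sub_visitsLimit_le (hpm : 0 < pm) (hp0 : 0 < p0) (hlt : pm < p1) {t : ℝ}
    (ht : pm / p1 ≤ t) (ht1 : t ≤ 1) (n : ℕ) (x : ℤ) (k : ℕ) :
    |visitsW pm p0 p1 n x k - (pm + p0 + p1) ^ n * visitsLimit pm p0 p1 x k| ≤
      (pm / t + p0 + p1 * t) ^ n * t ^ x := by
  have hp1 := hpm.trans hlt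
  have ht0 : 0 < t := (div_pos hpm hp1).trans_le ht
  induction n generalizing x k with
  | zero =>
    simpa using (abs_visitsW_zero_sub_visitsLimit_le hpm hp0 hlt x k).trans
      (hitProb_le_zpow hpm hp0 hlt ht ht1 x)
  | succ n ih =>
    have h (y : ℤ) : |arrive (visitsW pm p0 p1 n) y k -
        (pm + p0 + p1) ^ n * arrive (visitsLimit pm p0 p1) y k| ≤
          (pm / t + p0 + p1 * t) ^ n * t ^ y := by
      by_cases hy : y = 0
      · subst hy
        cases k with
        | zero => simp only [arrive, if_true, mul_zero, sub_zero, abs_zero]; positivity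
        | succ k => simpa only [arrive, if_true] using ih 0 k
      · simpa only [arrive, hy, if_false] using ih y k
    rw [visitsW_succ, pow_succ, mul_assoc, visitsLimit_first_step hpm hp0 hp1]
    have e : (pm / t + p0 + p1 * t) ^ (n + 1) * t ^ x =
        pm * ((pm / t + p0 + p1 * t) ^ n * t ^ (x - 1)) +
        p0 * ((pm / t + p0 + p1 * t) ^ n * t ^ x) +
        p1 * ((pm / t + p0 + p1 * t) ^ n * t ^ (x + 1)) := by
      rw [zpow_sub_one₀ ht0.ne', zpow_add_one₀ ht0.ne', pow_succ]
      ring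
    rw [e]
    have ha := abs_le.1 (h (x - 1))
    have hb := abs_le.1 (h x)
    have hc := abs_le.1 (h (x + 1))
    rw [abs_le]
    constructor
    · linarith [mul_le_mul_of_nonneg_left ha.1 hpm.le, mul_le_mul_of_nonneg_left hb.1 hp0.le,
        mul_le_mul_of_nonneg_left hc.1 hp1.le]
    · linarith [mul_le_mul_of_nonneg_left ha.2 hpm.le, mul_le_mul_of_nonneg_left hb.2 hp0.le,
        mul_le_mul_of_nonneg_left hc.2 hp1.le]

lemma tendsto_walkRetW_of_lt (hpm : 0 < pm) (hp0 : 0 < p0) (hlt : pm < p1) (k : ℕ) :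
    Filter.Tendsto (fun n : ℕ => walkRetW pm p0 p1 n k / (pm + p0 + p1) ^ n) Filter.atTop
      (nhds ((1 - (p1 - pm) / (pm + p0 + p1)) ^ k * ((p1 - pm) / (pm + p0 + p1)))) := by
  have hp1 := hpm.trans hlt
  have hP : 0 < pm + p0 + p1 := by positivity
  obtain ⟨t, ht, ht1⟩ := exists_between ((div_lt_one hp1).2 hlt)
  have ht0 : 0 < t := (div_pos hpm hp1).trans ht
  have hM : pm / t + p0 + p1 * t < pm + p0 + p1 := by
    have h : pm / t < p1 := (div_lt_comm₀ hp1 ht0).1 ht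
    have h' : pm / t * t = pm := div_mul_cancel₀ _ ht0.ne'
    nlinarith [mul_pos (sub_pos.2 h) (sub_pos.2 ht1)]
  have hlim := tendsto_pow_atTop_nhds_zero_of_lt_one
    (r := (pm / t + p0 + p1 * t) / (pm + p0 + p1)) (by positivity) ((div_lt_one hP).2 hM)
  refine tendsto_iff_norm_sub_tendsto_zero.2 (squeeze_zero (fun _ => norm_nonneg _) (fun n => ?_)
    hlim)
  have hb := abs_visitsW_sub_visitsLimit_le hpm hp0 hlt ht.le ht1.le n 0 k
  rw [zpow_zero, mul_one, visitsLimit_zero_left, ← walkRetW_eq_visitsW] at hb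
  have hPn : 0 < (pm + p0 + p1) ^ n := by positivity
  rw [Real.norm_eq_abs, div_pow, le_div_iff₀ hPn]
  nth_rw 2 [← abs_of_pos hPn]
  rw [← abs_mul, sub_mul, div_mul_cancel₀ _ hPn.ne', mul_comm _ ((pm + p0 + p1) ^ n)]
  exact hb

end PositiveDrift

/-- **Limit law for returns to zero, nonzero drift**: `X_n` converges in distribution
to `Geom(|p₁-p₋₁|/P(1))`. -/
theorem returns_to_zero_geometric (pm p0 p1 : ℝ)
    (hpm : 0 < pm) (hp0 : 0 < p0) (hp1 : 0 < p1) (hdrift : p1 ≠ pm) :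
    let P1 : ℝ := pm + p0 + p1
    let lam : ℝ := |p1 - pm| / P1
    ∀ k : ℕ,
      Filter.Tendsto (fun n : ℕ => walkRetW pm p0 p1 n k / P1 ^ n)
        Filter.atTop (nhds ((1 - lam) ^ k * lam)) := by
  intro P1 lam k
  rcases lt_or_gt_of_ne hdrift with h | h
  · simp only [lam, P1, abs_of_neg (sub_neg.2 h), neg_sub]
    simpa only [walkRetW_comm pm p0 p1, show p1 + p0 + pm = pm + p0 + p1 by ring] using
      tendsto_walkRetW_of_lt hp1 hp0 h k
  · simp only [lam, P1, abs_of_pos (sub_pos.2 h)]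
    exact tendsto_walkRetW_of_lt hpm hp0 h k
end
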